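/- arXiv:1205.3454 — 3 statements merged into one kernel-verified Lean document; each statement's English description precedes it below -/
import Mathlib

section
/- Let S be an idempotent covered semigroup. If e = (s,t,σ) is an idempotent of T(S), then the map e·T(S)·e → tSt sending (s₁,t₁,σ) to t₁ is a semigroup isomorphism from the local submonoid e·T(S)·e of T(S) onto the local submonoid tSt of S. If e = (s,t,τ) is an idempotent of T(S), then the map e·T(S)·e → sSs sending (s₁,t₁,τ) to s₁ is a semigroup isomorphism from e·T(S)·e onto sSs. -/
/-!
Multiplying on the right by `x` in `T*R₂` only uses one of the first two coordinates of `x`, and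
which one is decided by the `R₂`-label of the left factor. So if `e` is an idempotent with label
`α`, the coordinate selected by `α` is multiplicative on elements with label `α`, in particular on
the local submonoid at `e`, and it determines each `z` there because `z = e * z`. It is onto because
`(w, w, α)` is a product of three members of `E` as soon as `w` has an idempotent left identity and
an idempotent right identity; for `w` in a local submonoid of `S`, the idempotent of that submonoid
is both.
-/

namespace SemibandEmbed

/-- The two-element right-zero semigroup `R₂ = {σ, τ}`. -/
inductive R2 : Type where
  | σ : R2
  | τ : R2
  deriving DecidableEq

section GreenDefs

variable {S : Type*} [Semigroup S]

/-- Green's relation 𝓡 : `a 𝓡 b` iff `a S¹ = b S¹` (inside `S¹ = WithOne S`). -/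
def greenR (a b : S) : Prop :=
  {x : WithOne S | ∃ u : WithOne S, x = (a : WithOne S) * u} =
    {x : WithOne S | ∃ u : WithOne S, x = (b : WithOne S) * u}

/-- Green's relation 𝓛 : `a 𝓛 b` iff `S¹ a = S¹ b`. -/
def greenL (a b : S) : Prop :=
  {x : WithOne S | ∃ u : WithOne S, x = u * (a : WithOne S)} =
    {x : WithOne S | ∃ u : WithOne S, x = u * (b : WithOne S)}

/-- Green's relation 𝓗 = 𝓛 ∩ 𝓡. -/
def greenH (a b : S) : Prop := greenL a b ∧ greenR a b

/-- Green's relation 𝓓 : `a 𝓓 b` iff `a 𝓡 c` and `c 𝓛 b` for some `c`. -/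
def greenD (a b : S) : Prop := ∃ c : S, greenR a c ∧ greenL c b

/-- Green's relation 𝓙 : `a 𝓙 b` iff `S¹ a S¹ = S¹ b S¹`. -/
def greenJ (a b : S) : Prop :=
  {x : WithOne S | ∃ u v : WithOne S, x = u * (a : WithOne S) * v} =
    {x : WithOne S | ∃ u v : WithOne S, x = u * (b : WithOne S) * v}

/-- Mitsch's natural partial order on a semigroup. -/
def natLe (a b : S) : Prop := ∃ x y : S, a = x * b ∧ a = b * y ∧ a = a * y

end GreenDefs

/-- A semigroup is idempotent covered if every element `s` satisfies `s e = s = f s`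
for some idempotents `e`, `f`. -/
def IdemCovered (S : Type*) [Semigroup S] : Prop :=
  ∀ s : S, ∃ e f : S, IsIdempotentElem e ∧ IsIdempotentElem f ∧ s * e = s ∧ f * s = s

/-- A semigroup is regular if every `a` satisfies `a x a = a` for some `x`. -/
def IsRegularSemigroup (S : Type*) [Semigroup S] : Prop :=
  ∀ a : S, ∃ x : S, a * x * a = a

/-- A semigroup is periodic if every element generates a finite monogenic subsemigroup,
i.e. `aᵐ = aⁿ` for some `0 < m < n` (powers computed in `S¹ = WithOne S`). -/
def IsPeriodic (S : Type*) [Semigroup S] : Prop :=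
  ∀ a : S, ∃ m n : ℕ, 0 < m ∧ m < n ∧ (a : WithOne S) ^ m = (a : WithOne S) ^ n

/-- `𝓗` is a left congruence. -/
def IsLeftCongH (S : Type*) [Semigroup S] : Prop :=
  ∀ a b c : S, greenH a b → greenH (c * a) (c * b)

/-- `𝓗` is a right congruence. -/
def IsRightCongH (S : Type*) [Semigroup S] : Prop :=
  ∀ a b c : S, greenH a b → greenH (a * c) (b * c)

/-- A semigroup is completely regular if every element is 𝓗-related to an idempotent. -/
def IsCompletelyRegular (S : Type*) [Semigroup S] : Prop :=
  ∀ a : S, ∃ e : S, IsIdempotentElem e ∧ greenH a e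

section SemidirectProduct

variable {S : Type*} [Semigroup S]

/-- The multiplication of the semidirect product `(S × S) * R₂`:
`(t₁,s₁,σ)·(t₂,s₂,α) = (t₁s₂, s₁s₂, α)` and `(t₁,s₁,τ)·(t₂,s₂,α) = (t₁t₂, s₁t₂, α)`. -/
def sdMul (x y : S × S × R2) : S × S × R2 :=
  match x, y with
  | (t₁, s₁, R2.σ), (_, s₂, α) => (t₁ * s₂, s₁ * s₂, α)
  | (t₁, s₁, R2.τ), (t₂, _, α) => (t₁ * t₂, s₁ * t₂, α)

instance : Mul (S × S × R2) := ⟨sdMul⟩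

theorem sdMul_def (x y : S × S × R2) : x * y = sdMul x y := rfl

instance : Semigroup (S × S × R2) where
  mul_assoc x y z := by
    obtain ⟨t₁, s₁, α₁⟩ := x
    obtain ⟨t₂, s₂, α₂⟩ := y
    obtain ⟨t₃, s₃, α₃⟩ := z
    cases α₁ <;> cases α₂ <;> simp [sdMul_def, sdMul, mul_assoc]

/-- The set `E = {(s,t,α) ∈ E(T*R₂) : s ∈ S¹ t}`. -/
def Eset (S : Type*) [Semigroup S] : Set (S × S × R2) :=
  {x | IsIdempotentElem x ∧ ∃ a : WithOne S, (x.1 : WithOne S) = a * (x.2.1 : WithOne S)}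

/-- `T(S)`: the subsemigroup of the semidirect product generated by `E`. -/
def TS (S : Type*) [Semigroup S] : Subsemigroup (S × S × R2) :=
  Subsemigroup.closure (Eset S)

/-- Green's `𝓛` is a right congruence. -/
theorem greenL_mul_right {S : Type*} [Semigroup S] {a b : S} (hab : greenL a b) (c : S) :
    greenL (a * c) (b * c) := by
  have key : ∀ {a b : S}, greenL a b → ∀ x : WithOne S,
      (∃ u : WithOne S, x = u * ((a * c : S) : WithOne S)) →
      (∃ u : WithOne S, x = u * ((b * c : S) : WithOne S)) := by
    intro a b hab x hx
    obtain ⟨u, rfl⟩ := hx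
    have h1 : (u * (a : WithOne S)) ∈
        {x : WithOne S | ∃ u : WithOne S, x = u * (a : WithOne S)} := ⟨u, rfl⟩
    rw [greenL] at hab
    rw [hab] at h1
    obtain ⟨w, hw⟩ := h1
    refine ⟨w, ?_⟩
    rw [WithOne.coe_mul, WithOne.coe_mul, ← mul_assoc, hw, mul_assoc]
  have hab' : greenL b a := hab.symm
  ext x
  exact ⟨key hab x, key hab' x⟩

/-- `R(S) = {(s,t,α) ∈ T(S) : s 𝓛 t}`, a subsemigroup of `T(S)`. -/
def RS (S : Type*) [Semigroup S] : Subsemigroup ↥(TS S) where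
  carrier := {x | greenL (x : S × S × R2).1 (x : S × S × R2).2.1}
  mul_mem' := by
    rintro ⟨⟨s, t, α⟩, hx⟩ ⟨⟨u, v, β⟩, hy⟩ hxs hys
    simp only [Set.mem_setOf_eq] at hxs hys ⊢
    cases α <;> exact greenL_mul_right hxs _

end SemidirectProduct

section LocalSubmonoids

open Subsemigroup (corner)

theorem mem_corner_iff_exists_eq {M : Type*} [Semigroup M] {e z : M} :
    z ∈ corner e ↔ ∃ x, z = e * x * e :=
  exists_congr fun _ ↦ eq_comm

theorem coe_mem_corner {M : Type*} [Semigroup M] {T : Subsemigroup M} {e z : T}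
    (hz : z ∈ corner e) : (z : M) ∈ corner (e : M) := by
  obtain ⟨x, rfl⟩ := hz
  exact ⟨x, rfl⟩

/-- The coordinate of `x` used by a product `y * x` in `T*R₂` whose left factor `y` has label `α`:
the second for `σ`, the first for `τ`. -/
def R2.coord {S : Type*} : R2 → S × S × R2 → S
  | .σ, x => x.2.1
  | .τ, x => x.1

theorem coord_diag {S : Type*} (α β : R2) (w : S) : α.coord (w, w, β) = w := by
  cases α <;> rfl

variable {S : Type*} [Semigroup S]

theorem mul_eq_coord (x y : S × S × R2) :
    x * y = (x.1 * x.2.2.coord y, x.2.1 * x.2.2.coord y, y.2.2) := by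
  obtain ⟨_, _, _ | _⟩ := x <;> rfl

theorem coord_mul (α : R2) (x y : S × S × R2) :
    α.coord (x * y) = α.coord x * x.2.2.coord y := by
  rw [mul_eq_coord]
  cases α <;> rfl

theorem isIdempotentElem_coord {e : S × S × R2} (he : IsIdempotentElem e) :
    IsIdempotentElem (e.2.2.coord e) :=
  (coord_mul _ e e).symm.trans (congrArg e.2.2.coord he)

theorem label_eq_of_mem_corner {e z : S × S × R2} (hz : z ∈ corner e) : z.2.2 = e.2.2 := by
  obtain ⟨x, rfl⟩ := hz
  exact congrArg (·.2.2) (mul_eq_coord (e * x) e)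

theorem coord_mul_of_mem_corner {e z : S × S × R2} (hz : z ∈ corner e) (w : S × S × R2) :
    e.2.2.coord (z * w) = e.2.2.coord z * e.2.2.coord w := by
  rw [coord_mul, label_eq_of_mem_corner hz]

theorem mapsTo_coord_corner {e : S × S × R2} (he : IsIdempotentElem e) :
    Set.MapsTo e.2.2.coord (corner e : Set (S × S × R2)) (corner (e.2.2.coord e) : Set S) := by
  intro z hz
  obtain ⟨hez, hze⟩ := (Subsemigroup.mem_corner_iff he).mp hz
  refine (Subsemigroup.mem_corner_iff (isIdempotentElem_coord he)).mpr ⟨?_, ?_⟩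
  · rw [← coord_mul, hez]
  · rw [← coord_mul_of_mem_corner hz, hze]

theorem injOn_coord_corner {e : S × S × R2} (he : IsIdempotentElem e) :
    Set.InjOn e.2.2.coord (corner e : Set (S × S × R2)) := by
  intro z hz w hw hzw
  calc
    z = e * z := ((Subsemigroup.mem_corner_iff he).mp hz).1.symm
    _ = e * w := by
      rw [mul_eq_coord, mul_eq_coord, hzw, label_eq_of_mem_corner hz, label_eq_of_mem_corner hw]
    _ = w := ((Subsemigroup.mem_corner_iff he).mp hw).1

theorem diag_mem_Eset {f : S} (hf : IsIdempotentElem f) (α : R2) : (f, f, α) ∈ Eset S := by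
  refine ⟨?_, 1, (one_mul _).symm⟩
  cases α <;> simp only [IsIdempotentElem, mul_eq_coord, R2.coord, hf.eq]

theorem mk_σ_mem_Eset {w g : S} (hg : IsIdempotentElem g) (hwg : w * g = w) :
    (w, g, R2.σ) ∈ Eset S := by
  refine ⟨?_, w, ?_⟩
  · simp only [IsIdempotentElem, mul_eq_coord, R2.coord, hwg, hg.eq]
  · rw [← WithOne.coe_mul, hwg]

theorem diag_mem_TS {f g w : S} (hf : IsIdempotentElem f) (hg : IsIdempotentElem g)
    (hfw : f * w = w) (hwg : w * g = w) (α : R2) : (w, w, α) ∈ TS S := by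
  have factorization : (w, w, α) = (f, f, R2.τ) * (w, g, R2.σ) * (g, g, α) := by
    cases α <;> simp only [mul_eq_coord, R2.coord, hfw, hwg]
  rw [factorization]
  exact mul_mem (mul_mem (Subsemigroup.subset_closure (diag_mem_Eset hf R2.τ))
    (Subsemigroup.subset_closure (mk_σ_mem_Eset hg hwg)))
    (Subsemigroup.subset_closure (diag_mem_Eset hg α))

theorem surjOn_coord_corner {e : TS S} (he : IsIdempotentElem e.1) :
    Set.SurjOn (fun z : TS S ↦ e.1.2.2.coord z.1) (corner e) (corner (e.1.2.2.coord e.1)) := by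
  intro w hw
  have hp := isIdempotentElem_coord he
  obtain ⟨hpw, hwp⟩ := (Subsemigroup.mem_corner_iff hp).mp hw
  let d : TS S := ⟨(w, w, e.1.2.2), diag_mem_TS hp hp hpw hwp e.1.2.2⟩
  refine ⟨e * d * e, ⟨d, rfl⟩, ?_⟩
  calc
    e.1.2.2.coord (e.1 * d.1 * e.1)
      = e.1.2.2.coord e.1 * e.1.2.2.coord d.1 * e.1.2.2.coord e.1 := by
        rw [coord_mul, coord_mul, mul_eq_coord]
    _ = e.1.2.2.coord e.1 * w * e.1.2.2.coord e.1 := by rw [coord_diag]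
    _ = w := by rw [hpw, hwp]

theorem bijOn_coord_corner {e : TS S} (he : IsIdempotentElem e.1) :
    Set.BijOn (fun z : TS S ↦ e.1.2.2.coord z.1) (corner e) (corner (e.1.2.2.coord e.1)) where
  left _ hz := mapsTo_coord_corner he (coe_mem_corner hz)
  right.left _ hz _ hw hzw :=
    Subtype.ext (injOn_coord_corner he (coe_mem_corner hz) (coe_mem_corner hw) hzw)
  right.right := surjOn_coord_corner he

theorem statement_14_general {e : TS S} (he : IsIdempotentElem e) :
    Set.MapsTo (fun z : TS S ↦ e.1.2.2.coord z.1)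
      {z | ∃ x, z = e * x * e} {w | ∃ u, w = e.1.2.2.coord e.1 * u * e.1.2.2.coord e.1} ∧
    (∀ z w : TS S, (∃ x, z = e * x * e) → (∃ x, w = e * x * e) →
      e.1.2.2.coord (z * w).1 = e.1.2.2.coord z.1 * e.1.2.2.coord w.1) ∧
    Set.InjOn (fun z : TS S ↦ e.1.2.2.coord z.1) {z | ∃ x, z = e * x * e} ∧
    Set.SurjOn (fun z : TS S ↦ e.1.2.2.coord z.1)
      {z | ∃ x, z = e * x * e} {w | ∃ u, w = e.1.2.2.coord e.1 * u * e.1.2.2.coord e.1} := by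
  obtain ⟨mapsTo, injOn, surjOn⟩ := bijOn_coord_corner (congrArg Subtype.val he)
  simp only [← mem_corner_iff_exists_eq]
  exact ⟨mapsTo, fun z w hz _ ↦ coord_mul_of_mem_corner (coe_mem_corner hz) w.1, injOn, surjOn⟩

end LocalSubmonoids

/-- the local submonoids of `T(S)` are isomorphic to local submonoids of `S`:
if `e = (s,t,σ)` is an idempotent of `T(S)`, the second projection is a multiplication
preserving bijection from `e·T(S)·e` onto `tSt`; if `e = (s,t,τ)`, the first projection
is such a bijection from `e·T(S)·e` onto `sSs`. -/
theorem statement_14 {S : Type*} [Semigroup S] (hS : IdemCovered S)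
    (s t : S) (e : ↥(TS S)) (he : IsIdempotentElem e) :
    ((e : S × S × R2) = (s, t, R2.σ) →
      Set.MapsTo (fun x : ↥(TS S) => (x : S × S × R2).2.1)
        {z : ↥(TS S) | ∃ x : ↥(TS S), z = e * x * e} {w : S | ∃ u : S, w = t * u * t} ∧
      (∀ z w : ↥(TS S), (∃ x, z = e * x * e) → (∃ x, w = e * x * e) →
        ((z * w : ↥(TS S)) : S × S × R2).2.1 = (z : S × S × R2).2.1 * (w : S × S × R2).2.1) ∧
      Set.InjOn (fun x : ↥(TS S) => (x : S × S × R2).2.1)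
        {z : ↥(TS S) | ∃ x : ↥(TS S), z = e * x * e} ∧
      Set.SurjOn (fun x : ↥(TS S) => (x : S × S × R2).2.1)
        {z : ↥(TS S) | ∃ x : ↥(TS S), z = e * x * e} {w : S | ∃ u : S, w = t * u * t}) ∧
    ((e : S × S × R2) = (s, t, R2.τ) →
      Set.MapsTo (fun x : ↥(TS S) => (x : S × S × R2).1)
        {z : ↥(TS S) | ∃ x : ↥(TS S), z = e * x * e} {w : S | ∃ u : S, w = s * u * s} ∧
      (∀ z w : ↥(TS S), (∃ x, z = e * x * e) → (∃ x, w = e * x * e) →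
        ((z * w : ↥(TS S)) : S × S × R2).1 = (z : S × S × R2).1 * (w : S × S × R2).1) ∧
      Set.InjOn (fun x : ↥(TS S) => (x : S × S × R2).1)
        {z : ↥(TS S) | ∃ x : ↥(TS S), z = e * x * e} ∧
      Set.SurjOn (fun x : ↥(TS S) => (x : S × S × R2).1)
        {z : ↥(TS S) | ∃ x : ↥(TS S), z = e * x * e} {w : S | ∃ u : S, w = s * u * s}) := by
  obtain ⟨e, _⟩ := e
  constructor <;> (rintro rfl; exact statement_14_general he)

end SemibandEmbed
end

section
/- Let S be an idempotent covered semigroup. Then Green's relation 𝓗 is a left congruence on S if and only if 𝓗 is a left congruence on T(S); 𝓗 is a right congruence on S if and only if 𝓗 is a right congruence on T(S); and consequently S is cryptic (𝓗 is a congruence) if and only if T(S) is cryptic. -/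
namespace SemibandEmbed

/-!
For idempotent covered `S`, the elements of `T(S)` are the triples `(k * t, t, α)`. Right
multiplication acts on both coordinates by the same element of `S`, while left multiplication can
change the second coordinate freely and drags the first one along. Hence
`(s, t, α) 𝓗 (u, v, β)` in `T(S)` exactly when `α = β`, `t 𝓗 v`, and a single `k` witnesses both
`s = k * t` and `u = k * v`. The last condition survives multiplication on either side, so
congruence properties of `𝓗` pass from `S` to `T(S)`; they pass back along the embedding
`x ↦ (x, x, σ)`, which preserves and reflects `𝓗`.
-/

section Green

variable {S : Type*} [Semigroup S]

theorem greenL_iff_withOne {a b : S} :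
    greenL a b ↔ (∃ u : WithOne S, (a : WithOne S) = u * (b : WithOne S)) ∧
      ∃ u : WithOne S, (b : WithOne S) = u * (a : WithOne S) := by
  constructor
  · intro h
    exact ⟨(Set.ext_iff.1 h a).1 ⟨1, (one_mul _).symm⟩, (Set.ext_iff.1 h b).2 ⟨1, (one_mul _).symm⟩⟩
  · rintro ⟨⟨u, hu⟩, v, hv⟩
    refine Set.Subset.antisymm ?_ ?_
    · rintro _ ⟨w, rfl⟩
      exact ⟨w * u, by rw [hu, mul_assoc]⟩
    · rintro _ ⟨w, rfl⟩
      exact ⟨w * v, by rw [hv, mul_assoc]⟩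

theorem greenR_iff_withOne {a b : S} :
    greenR a b ↔ (∃ u : WithOne S, (a : WithOne S) = (b : WithOne S) * u) ∧
      ∃ u : WithOne S, (b : WithOne S) = (a : WithOne S) * u := by
  constructor
  · intro h
    exact ⟨(Set.ext_iff.1 h a).1 ⟨1, (mul_one _).symm⟩, (Set.ext_iff.1 h b).2 ⟨1, (mul_one _).symm⟩⟩
  · rintro ⟨⟨u, hu⟩, v, hv⟩
    refine Set.Subset.antisymm ?_ ?_
    · rintro _ ⟨w, rfl⟩
      exact ⟨u * w, by rw [hu, mul_assoc]⟩
    · rintro _ ⟨w, rfl⟩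
      exact ⟨v * w, by rw [hv, mul_assoc]⟩

theorem exists_eq_withOne_mul_iff {a b : S} (hb : ∃ e, e * b = b) :
    (∃ u : WithOne S, (a : WithOne S) = u * (b : WithOne S)) ↔ ∃ u, a = u * b := by
  constructor
  · rintro ⟨u, hu⟩
    cases u with
    | one =>
      obtain ⟨e, he⟩ := hb
      exact ⟨e, he.symm ▸ WithOne.coe_inj.1 (hu.trans (one_mul _))⟩
    | coe u => exact ⟨u, WithOne.coe_inj.1 hu⟩
  · rintro ⟨u, rfl⟩
    exact ⟨u, WithOne.coe_mul u b⟩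

theorem exists_eq_mul_withOne_iff {a b : S} (hb : ∃ e, b * e = b) :
    (∃ u : WithOne S, (a : WithOne S) = (b : WithOne S) * u) ↔ ∃ u, a = b * u := by
  constructor
  · rintro ⟨u, hu⟩
    cases u with
    | one =>
      obtain ⟨e, he⟩ := hb
      exact ⟨e, he.symm ▸ WithOne.coe_inj.1 (hu.trans (mul_one _))⟩
    | coe u => exact ⟨u, WithOne.coe_inj.1 hu⟩
  · rintro ⟨u, rfl⟩
    exact ⟨u, WithOne.coe_mul b u⟩

theorem IdemCovered.exists_mul_eq_self (hS : IdemCovered S) (a : S) : ∃ e, e * a = a := by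
  obtain ⟨-, f, -, -, -, hf⟩ := hS a
  exact ⟨f, hf⟩

theorem IdemCovered.exists_self_mul_eq (hS : IdemCovered S) (a : S) : ∃ e, a * e = a := by
  obtain ⟨e, -, -, -, he, -⟩ := hS a
  exact ⟨e, he⟩

theorem IdemCovered.greenL_iff (hS : IdemCovered S) {a b : S} :
    greenL a b ↔ (∃ u, a = u * b) ∧ ∃ u, b = u * a := by
  rw [greenL_iff_withOne, exists_eq_withOne_mul_iff (hS.exists_mul_eq_self b),
    exists_eq_withOne_mul_iff (hS.exists_mul_eq_self a)]

theorem IdemCovered.greenR_iff (hS : IdemCovered S) {a b : S} :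
    greenR a b ↔ (∃ u, a = b * u) ∧ ∃ u, b = a * u := by
  rw [greenR_iff_withOne, exists_eq_mul_withOne_iff (hS.exists_self_mul_eq b),
    exists_eq_mul_withOne_iff (hS.exists_self_mul_eq a)]

theorem idemCovered_closure {A : Set S} (hA : ∀ a ∈ A, IsIdempotentElem a) :
    IdemCovered (Subsemigroup.closure A) := by
  rintro ⟨x, hx⟩
  -- In a product of idempotents the first and the last factor are one-sided identities.
  induction hx using Subsemigroup.closure_induction with
  | mem a ha =>
    have idem : IsIdempotentElem (⟨a, Subsemigroup.subset_closure ha⟩ : Subsemigroup.closure A) :=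
      Subtype.ext (hA a ha)
    exact ⟨_, _, idem, idem, idem, idem⟩
  | mul x y hx hy ihx ihy =>
    obtain ⟨-, f, -, hf, -, hfx⟩ := ihx
    obtain ⟨e, -, he, -, hye, -⟩ := ihy
    refine ⟨e, f, he, hf, ?_, ?_⟩
    · rw [← MulMemClass.mk_mul_mk _ x y hx hy, mul_assoc, hye]
    · rw [← MulMemClass.mk_mul_mk _ x y hx hy, ← mul_assoc, hfx]

variable {T : Type*} [Semigroup T]

theorem IsLeftCongH.of_mulHom (φ : S →ₙ* T) (hφ : ∀ a b, greenH (φ a) (φ b) ↔ greenH a b)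
    (hT : IsLeftCongH T) : IsLeftCongH S := by
  intro a b c hab
  rw [← hφ, map_mul, map_mul]
  exact hT _ _ _ ((hφ a b).2 hab)

theorem IsRightCongH.of_mulHom (φ : S →ₙ* T) (hφ : ∀ a b, greenH (φ a) (φ b) ↔ greenH a b)
    (hT : IsRightCongH T) : IsRightCongH S := by
  intro a b c hab
  rw [← hφ, map_mul, map_mul]
  exact hT _ _ _ ((hφ a b).2 hab)

end Green

/-- The coordinate of the right factor that is used in a product in `T*R₂` whose left factor has
last component `α`; it lets multiplication be computed without distinguishing `σ` from `τ`. -/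
def R2.select {S : Type*} (α : R2) (y : S × S × R2) : S :=
  match α with
  | σ => y.2.1
  | τ => y.1

theorem R2.select_diag {S : Type*} (α β : R2) (w : S) : α.select (w, w, β) = w := by
  cases α <;> rfl

section TS

variable {S : Type*} [Semigroup S]

theorem mk_mul_eq (s t : S) (α : R2) (y : S × S × R2) :
    (s, t, α) * y = (s * α.select y, t * α.select y, y.2.2) := by
  cases α <;> rfl

theorem IsLeftCongH.greenH_select (hH : IsLeftCongH S) {t v : S}
    (h : greenH t v) (k : S) (α β γ : R2) :
    greenH (γ.select (k * t, t, α)) (γ.select (k * v, v, β)) := by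
  cases γ with
  | σ => exact h
  | τ => exact hH t v k h

namespace TS

theorem idemCovered (S : Type*) [Semigroup S] : IdemCovered (TS S) :=
  idemCovered_closure fun _ hx => hx.1

theorem diag_mem_of_isIdempotentElem {e : S} (he : IsIdempotentElem e) (α : R2) :
    (e, e, α) ∈ TS S := by
  have idem : IsIdempotentElem (e, e, α) := by
    rw [IsIdempotentElem, mk_mul_eq, R2.select_diag, he.eq]
  exact Subsemigroup.subset_closure ⟨idem, 1, (one_mul _).symm⟩

theorem mk_σ_mem_of_isIdempotentElem {s e : S} (he : IsIdempotentElem e) (hs : s * e = s) :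
    (s, e, R2.σ) ∈ TS S := by
  have idem : IsIdempotentElem (s, e, R2.σ) := by
    simp only [IsIdempotentElem, mk_mul_eq, R2.select, hs, he.eq]
  exact Subsemigroup.subset_closure ⟨idem, s, by rw [← WithOne.coe_mul, hs]⟩

theorem exists_eq_withOne_mul_of_mem {x : S × S × R2} (hx : x ∈ TS S) :
    ∃ k : WithOne S, (x.1 : WithOne S) = k * (x.2.1 : WithOne S) := by
  induction hx using Subsemigroup.closure_induction with
  | mem x hx => exact hx.2
  | mul x y _ _ hx _ =>
    obtain ⟨s, t, α⟩ := x
    obtain ⟨k, hk⟩ := hx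
    exact ⟨k, by simp only [mk_mul_eq, WithOne.coe_mul, hk, mul_assoc]⟩

theorem mk_mul_mem (hS : IdemCovered S) (k t : S) (α : R2) : (k * t, t, α) ∈ TS S := by
  obtain ⟨e, f, he, hf, hte, hft⟩ := hS t
  have factorization : (k * t, t, α) =
      (k * f, f, R2.σ) * (f, f, R2.τ) * (t, e, R2.σ) * (e, e, α) := by
    simp only [mk_mul_eq, R2.select, mul_assoc, hf.eq, hft, hte]
  rw [factorization]
  have hkf : (k * f, f, R2.σ) ∈ TS S :=
    mk_σ_mem_of_isIdempotentElem hf (by rw [mul_assoc, hf.eq])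
  exact mul_mem (mul_mem (mul_mem hkf (diag_mem_of_isIdempotentElem hf _))
    (mk_σ_mem_of_isIdempotentElem he hte)) (diag_mem_of_isIdempotentElem he _)

theorem mk_mem_iff (hS : IdemCovered S) {s t : S} {α : R2} :
    (s, t, α) ∈ TS S ↔ ∃ k, s = k * t := by
  constructor
  · intro h
    exact (exists_eq_withOne_mul_iff (hS.exists_mul_eq_self t)).1 (exists_eq_withOne_mul_of_mem h)
  · rintro ⟨k, rfl⟩
    exact mk_mul_mem hS k t α

theorem diag_mem (hS : IdemCovered S) (x : S) (α : R2) : (x, x, α) ∈ TS S := by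
  obtain ⟨e, he⟩ := hS.exists_mul_eq_self x
  exact (mk_mem_iff hS).2 ⟨e, he.symm⟩

theorem exists_select_eq_mul (hS : IdemCovered S) {u v : S} {β : R2} (hy : (u, v, β) ∈ TS S)
    (γ : R2) : ∃ k, γ.select (u, v, β) = k * v := by
  cases γ with
  | σ => exact (mk_mem_iff hS (α := β)).1 (diag_mem hS v β)
  | τ => exact (mk_mem_iff hS).1 hy

section GreenTS

variable {s t u v : S} {α β : R2}

theorem exists_eq_mul_mk_iff (hS : IdemCovered S) (hx : (s, t, α) ∈ TS S) (hy : (u, v, β) ∈ TS S) :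
    (∃ z : TS S, ⟨(s, t, α), hx⟩ = z * ⟨(u, v, β), hy⟩) ↔ α = β ∧ ∃ w, t = w * v := by
  constructor
  · rintro ⟨⟨⟨p, q, γ⟩, _⟩, h⟩
    simp only [MulMemClass.mk_mul_mk, mk_mul_eq, Subtype.mk.injEq, Prod.mk.injEq] at h
    obtain ⟨-, ht, hα⟩ := h
    obtain ⟨k, hk⟩ := exists_select_eq_mul hS hy γ
    exact ⟨hα, q * k, by rw [ht, hk, mul_assoc]⟩
  · rintro ⟨rfl, w, rfl⟩
    obtain ⟨k, rfl⟩ := (mk_mem_iff hS).1 hx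
    refine ⟨⟨(k * w, w, R2.σ), mk_mul_mem hS k w R2.σ⟩, ?_⟩
    simp only [MulMemClass.mk_mul_mk, mk_mul_eq, R2.select, mul_assoc]

theorem exists_eq_mk_mul_iff (hS : IdemCovered S) (hx : (s, t, α) ∈ TS S)
    (hy : (u, v, β) ∈ TS S) :
    (∃ z : TS S, ⟨(s, t, α), hx⟩ = ⟨(u, v, β), hy⟩ * z) ↔ ∃ w, s = u * w ∧ t = v * w := by
  constructor
  · rintro ⟨⟨z, _⟩, h⟩
    simp only [MulMemClass.mk_mul_mk, mk_mul_eq, Subtype.mk.injEq, Prod.mk.injEq] at h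
    exact ⟨β.select z, h.1, h.2.1⟩
  · rintro ⟨w, rfl, rfl⟩
    refine ⟨⟨(w, w, α), diag_mem hS w α⟩, ?_⟩
    simp only [MulMemClass.mk_mul_mk, mk_mul_eq, R2.select_diag]

theorem greenL_mk_iff (hS : IdemCovered S) (hx : (s, t, α) ∈ TS S) (hy : (u, v, β) ∈ TS S) :
    greenL (⟨(s, t, α), hx⟩ : TS S) ⟨(u, v, β), hy⟩ ↔ α = β ∧ greenL t v := by
  rw [(idemCovered S).greenL_iff, hS.greenL_iff, exists_eq_mul_mk_iff hS, exists_eq_mul_mk_iff hS,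
    eq_comm (a := β), ← and_and_left]

theorem greenR_mk_iff (hS : IdemCovered S) (hx : (s, t, α) ∈ TS S) (hy : (u, v, β) ∈ TS S) :
    greenR (⟨(s, t, α), hx⟩ : TS S) ⟨(u, v, β), hy⟩ ↔
      greenR t v ∧ ∃ k, s = k * t ∧ u = k * v := by
  rw [(idemCovered S).greenR_iff, hS.greenR_iff, exists_eq_mk_mul_iff hS,
    exists_eq_mk_mul_iff hS]
  constructor
  · rintro ⟨⟨w, -, ht⟩, w', hu, hv⟩
    obtain ⟨k, hk⟩ := (mk_mem_iff hS).1 hx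
    exact ⟨⟨⟨w, ht⟩, w', hv⟩, k, hk, by rw [hu, hk, mul_assoc, ← hv]⟩
  · rintro ⟨⟨⟨w, ht⟩, w', hv⟩, k, rfl, rfl⟩
    exact ⟨⟨w, by rw [mul_assoc, ← ht], ht⟩, w', by rw [mul_assoc, ← hv], hv⟩

theorem greenH_mk_iff (hS : IdemCovered S) (hx : (s, t, α) ∈ TS S) (hy : (u, v, β) ∈ TS S) :
    greenH (⟨(s, t, α), hx⟩ : TS S) ⟨(u, v, β), hy⟩ ↔
      α = β ∧ greenH t v ∧ ∃ k, s = k * t ∧ u = k * v := by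
  rw [greenH, greenL_mk_iff hS, greenR_mk_iff hS, greenH]
  tauto

end GreenTS

/-- The embedding `x ↦ (x, x, σ)` of an idempotent covered semigroup `S` into `T(S)`, along which
properties of `𝓗` are pulled back to `S`. The choice of `σ` over `τ` is immaterial. -/
def diag (hS : IdemCovered S) : S →ₙ* TS S where
  toFun x := ⟨(x, x, R2.σ), diag_mem hS x R2.σ⟩
  map_mul' _ _ := rfl

theorem greenH_diag_iff (hS : IdemCovered S) (a b : S) :
    greenH (diag hS a) (diag hS b) ↔ greenH a b := by
  refine (greenH_mk_iff hS _ _).trans ⟨fun h => h.2.1, fun h => ⟨rfl, h, ?_⟩⟩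
  obtain ⟨e, he⟩ := hS.exists_mul_eq_self a
  obtain ⟨-, w, rfl⟩ := hS.greenR_iff.1 h.2
  exact ⟨e, he.symm, by rw [← mul_assoc, he]⟩

theorem isLeftCongH (hS : IdemCovered S) (hH : IsLeftCongH S) : IsLeftCongH (TS S) := by
  rintro ⟨⟨s, t, α⟩, hx⟩ ⟨⟨u, v, β⟩, hy⟩ ⟨⟨p, q, γ⟩, hz⟩ hxy
  obtain ⟨rfl, htv, k, rfl, rfl⟩ := (greenH_mk_iff hS hx hy).1 hxy
  obtain ⟨l, rfl⟩ := (mk_mem_iff hS).1 hz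
  simp only [MulMemClass.mk_mul_mk, mk_mul_eq]
  exact (greenH_mk_iff hS _ _).2
    ⟨rfl, hH _ _ q (hH.greenH_select htv k α α γ), l, mul_assoc _ _ _, mul_assoc _ _ _⟩

theorem isRightCongH (hS : IdemCovered S) (hH : IsRightCongH S) : IsRightCongH (TS S) := by
  rintro ⟨⟨s, t, α⟩, hx⟩ ⟨⟨u, v, β⟩, hy⟩ ⟨z, hz⟩ hxy
  obtain ⟨rfl, htv, k, rfl, rfl⟩ := (greenH_mk_iff hS hx hy).1 hxy
  simp only [MulMemClass.mk_mul_mk, mk_mul_eq]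
  exact (greenH_mk_iff hS _ _).2
    ⟨rfl, hH t v (α.select z) htv, k, mul_assoc _ _ _, mul_assoc _ _ _⟩

theorem isLeftCongH_iff (hS : IdemCovered S) : IsLeftCongH S ↔ IsLeftCongH (TS S) :=
  ⟨isLeftCongH hS, .of_mulHom (diag hS) (greenH_diag_iff hS)⟩

theorem isRightCongH_iff (hS : IdemCovered S) : IsRightCongH S ↔ IsRightCongH (TS S) :=
  ⟨isRightCongH hS, .of_mulHom (diag hS) (greenH_diag_iff hS)⟩

end TS

end TS

/-- 𝓗 is a left (resp. right) congruence on `S` iff it is so on `T(S)`;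
consequently `S` is cryptic iff `T(S)` is cryptic. -/
theorem statement_16 {S : Type*} [Semigroup S] (hS : IdemCovered S) :
    (IsLeftCongH S ↔ IsLeftCongH ↥(TS S)) ∧
    (IsRightCongH S ↔ IsRightCongH ↥(TS S)) ∧
    ((IsLeftCongH S ∧ IsRightCongH S) ↔ (IsLeftCongH ↥(TS S) ∧ IsRightCongH ↥(TS S))) := by
  have left := TS.isLeftCongH_iff hS
  have right := TS.isRightCongH_iff hS
  exact ⟨left, right, and_congr left right⟩

end SemibandEmbed
end

section
/- Let S be a regular semigroup. Then R(S) = {(s,t,α) ∈ T(S) : s 𝓛 t} is a regular subsemigroup of T(S) in which every element is a product of two idempotents of R(S) (so R(S) is a semiband of depth 2), and the map φ : S → R(S), s ↦ (s,s,σ), is an injective semigroup homomorphism. Moreover, for each Green relation 𝓚 ∈ {𝓗, 𝓛, 𝓡, 𝓓, 𝓙}, the restriction of 𝓚 on T(S) to R(S) equals 𝓚 computed in R(S), and the restriction to R(S) of the natural partial order of T(S) equals the natural partial order of R(S). -/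
/-!
A Green preorder below a regular element is an equation: if `b * z * b = b`, then `a ∈ S¹b` iff
`a * z * b = a`, and `a` lies below `b` in the natural order iff `a = a * z * b = b * z * a =
a * z * a`. When `z` can be chosen in a subsemigroup these equations do not see the ambient
semigroup, so `𝓛`, `𝓡`, `𝓗` and the natural order restrict to regular subsemigroups. The relations
`𝓓` and `𝓙` factor through an intermediate element which is a right multiple of an element of the
subsemigroup, hence belongs to it when it is a right ideal, as `R(S)` is in `T(S)`.

If `a 𝓛 b` and `a * x * a = a`, then also `b * x * a = b`, which makes both factors of
`(a, b, σ) = (a * x, b * x, τ) * (a, x * a, σ)` idempotents with `𝓛`-related components. Dually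
`(a, b, τ) = (a * x, b * x, σ) * (x * b, b, τ)` when `b * x * b = b`.
-/

namespace SemibandEmbed

section GreenPreorders

variable {S : Type*} [Semigroup S] {a b z : S}

/-- The preorder `S¹a ⊆ S¹b` underlying Green's relation `𝓛`, stated as `a ∈ S¹b`. -/
def leL (a b : S) : Prop := ∃ u : WithOne S, (a : WithOne S) = u * b

/-- The preorder `aS¹ ⊆ bS¹` underlying Green's relation `𝓡`, stated as `a ∈ bS¹`. -/
def leR (a b : S) : Prop := ∃ u : WithOne S, (a : WithOne S) = b * u

/-- The preorder `S¹aS¹ ⊆ S¹bS¹` underlying Green's relation `𝓙`, stated as `a ∈ S¹bS¹`. -/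
def leJ (a b : S) : Prop := ∃ u v : WithOne S, (a : WithOne S) = u * b * v

theorem leL_iff_subset :
    leL a b ↔ {x : WithOne S | ∃ u, x = u * (a : WithOne S)} ⊆ {x | ∃ u, x = u * ↑b} := by
  refine ⟨?_, fun h => h ⟨1, (one_mul _).symm⟩⟩
  rintro ⟨u, hu⟩ _ ⟨w, rfl⟩
  exact ⟨w * u, by rw [hu, mul_assoc]⟩

theorem leR_iff_subset :
    leR a b ↔ {x : WithOne S | ∃ u, x = (a : WithOne S) * u} ⊆ {x | ∃ u, x = ↑b * u} := by
  refine ⟨?_, fun h => h ⟨1, (mul_one _).symm⟩⟩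
  rintro ⟨u, hu⟩ _ ⟨w, rfl⟩
  exact ⟨u * w, by rw [hu, mul_assoc]⟩

theorem leJ_iff_subset :
    leJ a b ↔
      {x : WithOne S | ∃ u v, x = u * (a : WithOne S) * v} ⊆ {x | ∃ u v, x = u * ↑b * v} := by
  refine ⟨?_, fun h => h ⟨1, 1, by rw [one_mul, mul_one]⟩⟩
  rintro ⟨u, v, huv⟩ _ ⟨w, w', rfl⟩
  exact ⟨w * u, v * w', by simp only [huv, mul_assoc]⟩

theorem greenL_iff_leL : greenL a b ↔ leL a b ∧ leL b a := by
  rw [greenL, Set.Subset.antisymm_iff, leL_iff_subset, leL_iff_subset]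

theorem greenR_iff_leR : greenR a b ↔ leR a b ∧ leR b a := by
  rw [greenR, Set.Subset.antisymm_iff, leR_iff_subset, leR_iff_subset]

theorem greenJ_iff_leJ : greenJ a b ↔ leJ a b ∧ leJ b a := by
  rw [greenJ, Set.Subset.antisymm_iff, leJ_iff_subset, leJ_iff_subset]

theorem leR_iff_eq_or_exists : leR a b ↔ a = b ∨ ∃ t : S, a = b * t := by
  simp only [leR, WithOne.exists, mul_one, ← WithOne.coe_mul, WithOne.coe_inj]

theorem leJ_iff_exists_leL_leR : leJ a b ↔ ∃ c, leL a c ∧ leR c b := by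
  constructor
  · rintro ⟨u, v, h⟩
    cases v with
    | one => exact ⟨b, ⟨u, by rw [h, mul_one]⟩, 1, (mul_one _).symm⟩
    | coe v => exact ⟨b * v, ⟨u, by rw [h, WithOne.coe_mul, mul_assoc]⟩, v, rfl⟩
  · rintro ⟨c, ⟨u, hu⟩, v, hv⟩
    exact ⟨u, v, by rw [hu, hv, mul_assoc]⟩

theorem leL_iff_mul_mul_eq (hz : b * z * b = b) : leL a b ↔ a * z * b = a := by
  refine ⟨?_, fun h => ⟨(a * z : S), by rw [← WithOne.coe_mul, h]⟩⟩
  rintro ⟨u, hu⟩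
  rw [← WithOne.coe_inj]
  calc ((a * z * b : S) : WithOne S) = u * (b * z * b : S) := by
        simp only [WithOne.coe_mul, hu, mul_assoc]
    _ = a := by rw [hz, hu]

theorem leR_iff_mul_mul_eq (hz : b * z * b = b) : leR a b ↔ b * z * a = a := by
  refine ⟨?_, fun h => ⟨(z * a : S), by rw [← WithOne.coe_mul, ← mul_assoc, h]⟩⟩
  rintro ⟨u, hu⟩
  rw [← WithOne.coe_inj]
  calc ((b * z * a : S) : WithOne S) = (b * z * b : S) * u := by
        simp only [WithOne.coe_mul, hu, mul_assoc]
    _ = a := by rw [hz, hu]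

theorem natLe_iff_mul_mul_eq (hz : b * z * b = b) :
    natLe a b ↔ a * z * b = a ∧ b * z * a = a ∧ a * z * a = a := by
  constructor
  · rintro ⟨x, y, hx, hy, hay⟩
    have left : a * z * b = a := by
      calc a * z * b = x * (b * z * b) := by simp only [hx, mul_assoc]
        _ = a := by rw [hz, hx]
    have right : b * z * a = a := by
      calc b * z * a = b * z * b * y := by simp only [hy, mul_assoc]
        _ = a := by rw [hz, hy]
    refine ⟨left, right, ?_⟩
    calc a * z * a = a * z * b * y := by rw [mul_assoc (a * z), ← hy]
      _ = a := by rw [left, ← hay]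
  · rintro ⟨hab, hba, haa⟩
    refine ⟨a * z, z * a, hab.symm, ?_, ?_⟩
    · rw [← mul_assoc, hba]
    · rw [← mul_assoc, haa]

theorem greenL_mul_left_of_mul_mul_eq (hz : a * z * a = a) : greenL a (z * a) :=
  greenL_iff_leL.2 ⟨⟨a, by rw [← WithOne.coe_mul, ← mul_assoc, hz]⟩, z, rfl⟩

end GreenPreorders

section Restriction

variable {S : Type*} [Semigroup S] {R : Subsemigroup S}

theorem leL_coe_iff {x y z : R} (hz : y * z * y = y) : leL (x : S) (y : S) ↔ leL x y := by
  have hz' : (y : S) * z * y = y := congrArg Subtype.val hz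
  rw [leL_iff_mul_mul_eq hz, leL_iff_mul_mul_eq hz']
  norm_cast

theorem leR_coe_iff {x y z : R} (hz : y * z * y = y) : leR (x : S) (y : S) ↔ leR x y := by
  have hz' : (y : S) * z * y = y := congrArg Subtype.val hz
  rw [leR_iff_mul_mul_eq hz, leR_iff_mul_mul_eq hz']
  norm_cast

theorem natLe_coe_iff {x y z : R} (hz : y * z * y = y) :
    natLe (x : S) (y : S) ↔ natLe x y := by
  have hz' : (y : S) * z * y = y := congrArg Subtype.val hz
  rw [natLe_iff_mul_mul_eq hz, natLe_iff_mul_mul_eq hz']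
  norm_cast

theorem greenL_coe_iff (hR : IsRegularSemigroup R) (x y : R) :
    greenL (x : S) (y : S) ↔ greenL x y := by
  obtain ⟨_, hx⟩ := hR x
  obtain ⟨_, hy⟩ := hR y
  rw [greenL_iff_leL, greenL_iff_leL, leL_coe_iff hx, leL_coe_iff hy]

theorem greenR_coe_iff (hR : IsRegularSemigroup R) (x y : R) :
    greenR (x : S) (y : S) ↔ greenR x y := by
  obtain ⟨_, hx⟩ := hR x
  obtain ⟨_, hy⟩ := hR y
  rw [greenR_iff_leR, greenR_iff_leR, leR_coe_iff hx, leR_coe_iff hy]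

theorem greenH_coe_iff (hR : IsRegularSemigroup R) (x y : R) :
    greenH (x : S) (y : S) ↔ greenH x y :=
  and_congr (greenL_coe_iff hR x y) (greenR_coe_iff hR x y)

/-- The subsemigroup `R` of `S` is a right ideal. -/
def IsRightIdeal (R : Subsemigroup S) : Prop := ∀ x ∈ R, ∀ t : S, x * t ∈ R

theorem IsRightIdeal.mem_of_leR (hI : IsRightIdeal R) {x c : S} (hx : x ∈ R) (h : leR c x) :
    c ∈ R := by
  obtain rfl | ⟨t, rfl⟩ := leR_iff_eq_or_exists.1 h
  · exact hx
  · exact hI x hx t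

theorem greenD_coe_iff (hR : IsRegularSemigroup R) (hI : IsRightIdeal R) (x y : R) :
    greenD (x : S) (y : S) ↔ greenD x y := by
  constructor
  · rintro ⟨c, hxc, hcy⟩
    lift c to R using hI.mem_of_leR x.2 (greenR_iff_leR.1 hxc).2
    exact ⟨c, (greenR_coe_iff hR x c).1 hxc, (greenL_coe_iff hR c y).1 hcy⟩
  · rintro ⟨c, hxc, hcy⟩
    exact ⟨c, (greenR_coe_iff hR x c).2 hxc, (greenL_coe_iff hR c y).2 hcy⟩

theorem leJ_coe_iff (hR : IsRegularSemigroup R) (hI : IsRightIdeal R) (x y : R) :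
    leJ (x : S) (y : S) ↔ leJ x y := by
  obtain ⟨_, hy⟩ := hR y
  simp only [leJ_iff_exists_leL_leR]
  constructor
  · rintro ⟨c, hxc, hcy⟩
    lift c to R using hI.mem_of_leR y.2 hcy
    obtain ⟨_, hc⟩ := hR c
    exact ⟨c, (leL_coe_iff hc).1 hxc, (leR_coe_iff hy).1 hcy⟩
  · rintro ⟨c, hxc, hcy⟩
    obtain ⟨_, hc⟩ := hR c
    exact ⟨c, (leL_coe_iff hc).2 hxc, (leR_coe_iff hy).2 hcy⟩

theorem greenJ_coe_iff (hR : IsRegularSemigroup R) (hI : IsRightIdeal R) (x y : R) :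
    greenJ (x : S) (y : S) ↔ greenJ x y := by
  rw [greenJ_iff_leJ, greenJ_iff_leJ, leJ_coe_iff hR hI, leJ_coe_iff hR hI]

end Restriction

section SemibandRS

variable {S : Type*} [Semigroup S]

theorem mk_σ_mul (a b c d : S) (α : R2) : (a, b, R2.σ) * (c, d, α) = (a * d, b * d, α) := rfl

theorem mk_τ_mul (a b c d : S) (α : R2) : (a, b, R2.τ) * (c, d, α) = (a * c, b * c, α) := rfl

theorem isIdempotentElem_mk_σ_iff {a b : S} :
    IsIdempotentElem (a, b, R2.σ) ↔ a * b = a ∧ b * b = b := by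
  simp only [IsIdempotentElem, mk_σ_mul, Prod.mk.injEq, and_true]

theorem isIdempotentElem_mk_τ_iff {a b : S} :
    IsIdempotentElem (a, b, R2.τ) ↔ a * a = a ∧ b * a = b := by
  simp only [IsIdempotentElem, mk_τ_mul, Prod.mk.injEq, and_true]

theorem exists_isIdempotentElem_mul_eq_mk_σ {a b x : S} (hx : a * x * a = a) (h : greenL a b) :
    ∃ e f : S × S × R2, IsIdempotentElem e ∧ IsIdempotentElem f ∧
      greenL e.1 e.2.1 ∧ greenL f.1 f.2.1 ∧ (a, b, R2.σ) = e * f := by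
  have hb : b * x * a = b := (leL_iff_mul_mul_eq hx).1 (greenL_iff_leL.1 h).2
  refine ⟨(a * x, b * x, R2.τ), (a, x * a, R2.σ), isIdempotentElem_mk_τ_iff.2 ?_,
    isIdempotentElem_mk_σ_iff.2 ?_, greenL_mul_right h x, greenL_mul_left_of_mul_mul_eq hx, ?_⟩
  · simp only [← mul_assoc, hx, hb, and_self]
  · simp only [mul_assoc x, ← mul_assoc a, hx, and_self]
  · rw [mk_τ_mul, hx, hb]

theorem exists_isIdempotentElem_mul_eq_mk_τ {a b x : S} (hx : b * x * b = b) (h : greenL a b) :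
    ∃ e f : S × S × R2, IsIdempotentElem e ∧ IsIdempotentElem f ∧
      greenL e.1 e.2.1 ∧ greenL f.1 f.2.1 ∧ (a, b, R2.τ) = e * f := by
  have ha : a * x * b = a := (leL_iff_mul_mul_eq hx).1 (greenL_iff_leL.1 h).1
  refine ⟨(a * x, b * x, R2.σ), (x * b, b, R2.τ), isIdempotentElem_mk_σ_iff.2 ?_,
    isIdempotentElem_mk_τ_iff.2 ?_, greenL_mul_right h x,
    (greenL_mul_left_of_mul_mul_eq hx).symm, ?_⟩
  · simp only [← mul_assoc, hx, ha, and_self]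
  · simp only [mul_assoc x, ← mul_assoc b, hx, and_self]
  · rw [mk_σ_mul, hx, ha]

theorem exists_isIdempotentElem_mul_eq (hS : IsRegularSemigroup S) {p : S × S × R2}
    (h : greenL p.1 p.2.1) :
    ∃ e f : S × S × R2, IsIdempotentElem e ∧ IsIdempotentElem f ∧
      greenL e.1 e.2.1 ∧ greenL f.1 f.2.1 ∧ p = e * f := by
  obtain ⟨a, b, _ | _⟩ := p
  · obtain ⟨_, hx⟩ := hS a
    exact exists_isIdempotentElem_mul_eq_mk_σ hx h
  · obtain ⟨_, hx⟩ := hS b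
    exact exists_isIdempotentElem_mul_eq_mk_τ hx h

theorem mem_TS_of_greenL (hS : IsRegularSemigroup S) {p : S × S × R2} (h : greenL p.1 p.2.1) :
    p ∈ TS S := by
  obtain ⟨e, f, he, hf, heL, hfL, rfl⟩ := exists_isIdempotentElem_mul_eq hS h
  exact mul_mem (Subsemigroup.subset_closure ⟨he, (greenL_iff_leL.1 heL).1⟩)
    (Subsemigroup.subset_closure ⟨hf, (greenL_iff_leL.1 hfL).1⟩)

theorem exists_isIdempotentElem_mem_RS_mul_eq (hS : IsRegularSemigroup S) {x : TS S}
    (hx : x ∈ RS S) :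
    ∃ e f : TS S, e ∈ RS S ∧ f ∈ RS S ∧ IsIdempotentElem e ∧ IsIdempotentElem f ∧
      x = e * f := by
  obtain ⟨e, f, he, hf, heL, hfL, hef⟩ := exists_isIdempotentElem_mul_eq hS hx
  exact ⟨⟨e, mem_TS_of_greenL hS heL⟩, ⟨f, mem_TS_of_greenL hS hfL⟩, heL, hfL,
    Subtype.ext he, Subtype.ext hf, Subtype.ext hef⟩

theorem isRightIdeal_RS : IsRightIdeal (RS S) := by
  rintro ⟨⟨a, b, _ | _⟩, _⟩ (h : greenL a b) ⟨⟨c, d, _⟩, _⟩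
  · exact greenL_mul_right h d
  · exact greenL_mul_right h c

/-- The diagonal homomorphism `s ↦ (s, s, α)` of `S` into `R(S)`; `α = σ` gives the embedding `φ`,
and for each `α` the image contains a generalized inverse of every `(s, t, α)` in `R(S)`. -/
def diagonal (hS : IsRegularSemigroup S) (α : R2) : S →ₙ* RS S where
  toFun s := ⟨⟨(s, s, α), mem_TS_of_greenL hS rfl⟩, (rfl : greenL s s)⟩
  map_mul' s t := by cases α <;> rfl

theorem diagonal_injective (hS : IsRegularSemigroup S) (α : R2) :
    Function.Injective (diagonal hS α) :=
  fun _ _ h => congrArg (fun x : RS S => (x : S × S × R2).1) h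

theorem isRegularSemigroup_RS (hS : IsRegularSemigroup S) : IsRegularSemigroup (RS S) := by
  rintro ⟨⟨⟨a, b, _ | _⟩, _⟩, h : greenL a b⟩
  · obtain ⟨x, hx⟩ := hS b
    have ha : a * x * b = a := (leL_iff_mul_mul_eq hx).1 (greenL_iff_leL.1 h).1
    refine ⟨diagonal hS R2.σ x, Subtype.ext (Subtype.ext ?_)⟩
    change (a * x * b, b * x * b, R2.σ) = (a, b, R2.σ)
    rw [ha, hx]
  · obtain ⟨x, hx⟩ := hS a
    have hb : b * x * a = b := (leL_iff_mul_mul_eq hx).1 (greenL_iff_leL.1 h).2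
    refine ⟨diagonal hS R2.τ x, Subtype.ext (Subtype.ext ?_)⟩
    change (a * x * a, b * x * a, R2.τ) = (a, b, R2.τ)
    rw [hx, hb]

end SemibandRS

/-- for a regular semigroup `S`, `R(S) = {(s,t,α) ∈ T(S) : s 𝓛 t}` is a regular
subsemigroup of `T(S)`, every element of `R(S)` is a product of two idempotents of `R(S)`
(so `R(S)` is a semiband of depth 2), `s ↦ (s,s,σ)` embeds `S` into `R(S)`, and the Green
relations and natural partial order of `R(S)` are the restrictions of those of `T(S)`. -/
theorem statement_18 {S : Type*} [Semigroup S] (hS : IsRegularSemigroup S) :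
    ((RS S : Set ↥(TS S)) =
        {x : ↥(TS S) | greenL (x : S × S × R2).1 (x : S × S × R2).2.1}) ∧
    (∀ x ∈ RS S, ∃ y ∈ RS S, x * y * x = x) ∧
    (∀ x ∈ RS S, ∃ e f : ↥(TS S), e ∈ RS S ∧ f ∈ RS S ∧ IsIdempotentElem e ∧
      IsIdempotentElem f ∧ x = e * f) ∧
    (∃ φ : S → ↥(RS S), (∀ s : S, ((φ s : ↥(TS S)) : S × S × R2) = (s, s, R2.σ)) ∧
      (∀ s t : S, φ (s * t) = φ s * φ t) ∧ Function.Injective φ) ∧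
    (∀ x y : ↥(RS S),
      (greenH x y ↔ greenH (x : ↥(TS S)) (y : ↥(TS S))) ∧
      (greenL x y ↔ greenL (x : ↥(TS S)) (y : ↥(TS S))) ∧
      (greenR x y ↔ greenR (x : ↥(TS S)) (y : ↥(TS S))) ∧
      (greenD x y ↔ greenD (x : ↥(TS S)) (y : ↥(TS S))) ∧
      (greenJ x y ↔ greenJ (x : ↥(TS S)) (y : ↥(TS S))) ∧
      (natLe x y ↔ natLe (x : ↥(TS S)) (y : ↥(TS S)))) := by
  have hR : IsRegularSemigroup (RS S) := isRegularSemigroup_RS hS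
  have hI : IsRightIdeal (RS S) := isRightIdeal_RS
  refine ⟨rfl, fun x hx => ?_, fun x hx => exists_isIdempotentElem_mem_RS_mul_eq hS hx,
    ⟨diagonal hS R2.σ, fun _ => rfl, map_mul _, diagonal_injective hS R2.σ⟩, fun x y => ?_⟩
  · obtain ⟨y, hy⟩ := hR ⟨x, hx⟩
    exact ⟨y, y.2, congrArg Subtype.val hy⟩
  · obtain ⟨_, hy⟩ := hR y
    exact ⟨(greenH_coe_iff hR x y).symm, (greenL_coe_iff hR x y).symm,
      (greenR_coe_iff hR x y).symm, (greenD_coe_iff hR hI x y).symm,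
      (greenJ_coe_iff hR hI x y).symm, (natLe_coe_iff hy).symm⟩

end SemibandEmbed
end
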